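/- Let n ≥ 4 and let G be a connected simple graph on n vertices with domination number 2 whose spectral radius is minimum among all connected simple graphs on n vertices with domination number 2. Then G is isomorphic to H_{⌊n/2⌋,⌈n/2⌉}. -/

import Mathlib

open SimpleGraph

/-- Adjacency matrix of a simple graph over ℝ. -/
noncomputable def adjMat {V : Type*} (G : SimpleGraph V) : Matrix V V ℝ :=
  Matrix.of fun i j => @ite ℝ (G.Adj i j) (Classical.propDecidable _) 1 0

/-- Spectral radius: the largest eigenvalue (supremum of the real spectrum)
of the adjacency matrix. -/
noncomputable def specRad {V : Type*} [Fintype V] [DecidableEq V]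
    (G : SimpleGraph V) : ℝ :=
  sSup (spectrum ℝ (adjMat G))

/-- `D` is a dominating set of `G`. -/
def IsDomSet {V : Type*} (G : SimpleGraph V) (D : Finset V) : Prop :=
  ∀ v ∉ D, ∃ u ∈ D, G.Adj u v

/-- The domination number of `G`. -/
noncomputable def domNum {V : Type*} [Fintype V] (G : SimpleGraph V) : ℕ :=
  sInf {k | ∃ D : Finset V, IsDomSet G D ∧ D.card = k}

/-- The tree `H_{⌊n/2⌋,⌈n/2⌉}`: the path v1 v2 v3 v4 (vertices `Sum.inl 0, …, Sum.inl 3`)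
with `⌊n/2⌋ - 2` pendant edges at v1 and `⌈n/2⌉ - 2` pendant edges at v4. -/
def Hgraph (n : ℕ) : SimpleGraph (Fin 4 ⊕ (Fin (n / 2 - 2) ⊕ Fin ((n + 1) / 2 - 2))) :=
  SimpleGraph.fromRel (fun x y =>
    (x = Sum.inl 0 ∧ y = Sum.inl 1) ∨
    (x = Sum.inl 1 ∧ y = Sum.inl 2) ∨
    (x = Sum.inl 2 ∧ y = Sum.inl 3) ∨
    (∃ j : Fin (n / 2 - 2), x = Sum.inl 0 ∧ y = Sum.inr (Sum.inl j)) ∨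
    (∃ j : Fin ((n + 1) / 2 - 2), x = Sum.inl 3 ∧ y = Sum.inr (Sum.inr j)))

/-!
All spectral estimates pair an adjacency matrix with a Perron vector: upper bounds on the spectral
radius `ρ(H)` of `H = Hgraph n` come from explicit test vectors, lower bounds on `ρ = ρ(G)` from
the eigenvector equations at two or three vertices. Since adding edges to a connected graph
strictly increases the spectral radius, `ρ(G) ≤ ρ(H)` forces `G ≃ H` as soon as `G` contains a
spanning copy of `H`. Put `m = ⌈n/2⌉`.

If some vertex `x` has degree at least `m`, then, as `x` alone does not dominate, there is a vertex
at distance two from `x` and `(ρ² - 1) (ρ² - m) ≥ 1`. A test vector shows that this exceeds what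
`H` allows when `n ≥ 5`; for `n = 4`, `H` is a path, which `G` contains. Otherwise the closed
neighbourhoods of a dominating pair `u`, `v` have at most `m` vertices each and cover `G`, so they
meet in at most one vertex. If they are disjoint, an edge between them yields a spanning copy of
`H`. If they share a vertex, then `n = 2m - 1` and adding the eigenvector equations at `u` and `v`
gives `ρ² ≥ m`, which is too large for `n ≥ 7`; for `n = 5`, `H` is again a path contained in `G`.
-/

open Finset Matrix

section AdjacencyMatrix

variable {V : Type*} (G : SimpleGraph V)

theorem adjMat_eq_adjMatrix [DecidableRel G.Adj] : adjMat G = G.adjMatrix ℝ := by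
  ext i j
  by_cases h : G.Adj i j <;> simp [adjMat, h]

theorem isHermitian_adjMat : (adjMat G).IsHermitian := by
  classical
  rw [adjMat_eq_adjMatrix, IsHermitian, conjTranspose_eq_transpose_of_trivial,
    transpose_adjMatrix]

theorem adjMat_nonneg (i j : V) : 0 ≤ adjMat G i j := by
  by_cases h : G.Adj i j <;> simp [adjMat, h]

variable [Fintype V]

theorem adjMat_mulVec_apply [DecidableRel G.Adj] (f : V → ℝ) (i : V) :
    (adjMat G *ᵥ f) i = ∑ j ∈ G.neighborFinset i, f j := by
  rw [adjMat_eq_adjMatrix, adjMatrix_mulVec_apply]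

theorem dotProduct_adjMat_mulVec (f g : V → ℝ) :
    f ⬝ᵥ (adjMat G *ᵥ g) = (adjMat G *ᵥ f) ⬝ᵥ g := by
  classical
  rw [dotProduct_mulVec, ← mulVec_transpose, adjMat_eq_adjMatrix, transpose_adjMatrix]

theorem adjMat_mulVec_mono {H G : SimpleGraph V} (h : H ≤ G) {f : V → ℝ} (hf : 0 ≤ f) :
    adjMat H *ᵥ f ≤ adjMat G *ᵥ f := by
  classical
  intro i
  rw [adjMat_mulVec_apply, adjMat_mulVec_apply]
  exact sum_le_sum_of_subset_of_nonneg (Set.toFinset_mono (neighborSet_mono h i))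
    fun j _ _ => hf j

end AdjacencyMatrix

section SpectralBound

variable {V : Type*} [Fintype V] {A : Matrix V V ℝ}

theorem dotProduct_mulVec_le_abs (hA : ∀ i j, 0 ≤ A i j) (f : V → ℝ) :
    f ⬝ᵥ (A *ᵥ f) ≤ |f| ⬝ᵥ (A *ᵥ |f|) := by
  simp only [dotProduct, mulVec, mul_sum]
  refine sum_le_sum fun i _ => sum_le_sum fun j _ => ?_
  calc f i * (A i j * f j) = A i j * (f i * f j) := by ring
    _ ≤ A i j * (|f i| * |f j|) := by
      rw [← abs_mul]
      exact mul_le_mul_of_nonneg_left (le_abs_self _) (hA i j)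
    _ = |f| i * (A i j * |f| j) := by simp only [Pi.abs_apply]; ring

variable [DecidableEq V] {a : ℝ}

theorem posSemidef_algebraMap_sub (hA : A.IsHermitian) (ha : ∀ b ∈ spectrum ℝ A, b ≤ a) :
    (algebraMap ℝ (Matrix V V ℝ) a - A).PosSemidef := by
  refine posSemidef_iff_isHermitian_and_spectrum_nonneg.mpr
    ⟨(IsSelfAdjoint.algebraMap _ (IsSelfAdjoint.all a)).sub hA, ?_⟩
  rw [← spectrum.singleton_sub_eq]
  rintro _ ⟨_, rfl, b, hb, rfl⟩
  exact sub_nonneg.mpr (ha b hb)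

/- Replacing an eigenvector for the top eigenvalue by its absolute value does not decrease the
Rayleigh quotient, so the absolute value is again an eigenvector. -/
theorem mulVec_abs_eq_smul (hA : A.IsHermitian) (hA_nonneg : ∀ i j, 0 ≤ A i j)
    (ha : ∀ b ∈ spectrum ℝ A, b ≤ a) {f : V → ℝ} (hf : A *ᵥ f = a • f) :
    A *ᵥ |f| = a • |f| := by
  have hpsd := posSemidef_algebraMap_sub hA ha
  have shift_mulVec : (algebraMap ℝ (Matrix V V ℝ) a - A) *ᵥ |f| = a • |f| - A *ᵥ |f| := by
    rw [sub_mulVec, Algebra.algebraMap_eq_smul_one, smul_mulVec, one_mulVec]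
  have form_nonpos : star |f| ⬝ᵥ ((algebraMap ℝ (Matrix V V ℝ) a - A) *ᵥ |f|) ≤ 0 := by
    have abs_dotProduct_abs : |f| ⬝ᵥ |f| = f ⬝ᵥ f := by simp [dotProduct]
    have rayleigh := dotProduct_mulVec_le_abs hA_nonneg f
    rw [hf, dotProduct_smul] at rayleigh
    rw [shift_mulVec, star_trivial, dotProduct_sub, dotProduct_smul, abs_dotProduct_abs]
    exact sub_nonpos.mpr rayleigh
  have form_eq_zero := form_nonpos.antisymm (hpsd.dotProduct_mulVec_nonneg |f|)
  rw [hpsd.dotProduct_mulVec_zero_iff, shift_mulVec, sub_eq_zero] at form_eq_zero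
  exact form_eq_zero.symm

end SpectralBound

section Connected

variable {V : Type*}

theorem exists_boundary_adj {G : SimpleGraph V} (hG : G.Connected) {S : Set V}
    {a b : V} (ha : a ∈ S) (hb : b ∉ S) : ∃ y ∈ S, ∃ z ∉ S, G.Adj y z := by
  obtain ⟨p⟩ := hG.preconnected a b
  obtain ⟨d, -, hfst, hsnd⟩ := p.exists_boundary_dart S ha hb
  exact ⟨d.fst, hfst, d.snd, hsnd, d.adj⟩

variable [Fintype V]

theorem pos_of_mulVec_eq_smul {G : SimpleGraph V} (hG : G.Connected) {f : V → ℝ} {μ : ℝ}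
    (hf : 0 ≤ f) (hf_ne : f ≠ 0) (hμ : adjMat G *ᵥ f = μ • f) (i : V) : 0 < f i := by
  classical
  refine (hf i).lt_of_ne' fun hi => ?_
  obtain ⟨k, hk⟩ := Function.ne_iff.mp hf_ne
  obtain ⟨y, hy, z, hz, hyz⟩ := exists_boundary_adj hG (S := {j | f j = 0}) hi hk
  have sum_eq_zero : ∑ j ∈ G.neighborFinset y, f j = 0 := by
    rw [← adjMat_mulVec_apply, hμ, Pi.smul_apply, show f y = 0 from hy, smul_zero]
  exact hz ((sum_eq_zero_iff_of_nonneg fun j _ => hf j).mp sum_eq_zero z (by simpa using hyz))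

end Connected

section SpectralRadius

variable {V W : Type*} [Fintype V] [DecidableEq V] [Fintype W] [DecidableEq W]

theorem le_specRad (G : SimpleGraph V) {b : ℝ} (hb : b ∈ spectrum ℝ (adjMat G)) :
    b ≤ specRad G :=
  le_csSup finite_real_spectrum.bddAbove hb

theorem exists_ne_zero_mulVec_eq_specRad_smul [Nonempty V] (G : SimpleGraph V) :
    ∃ f : V → ℝ, f ≠ 0 ∧ adjMat G *ᵥ f = specRad G • f := by
  have nonempty_spectrum : (spectrum ℝ (adjMat G)).Nonempty :=
    ⟨_, (isHermitian_adjMat G).eigenvalues_mem_spectrum_real (Classical.arbitrary V)⟩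
  have specRad_mem : specRad G ∈ spectrum ℝ (adjMat G) :=
    nonempty_spectrum.csSup_mem finite_real_spectrum
  rw [← spectrum_toLin', ← Module.End.hasEigenvalue_iff_mem_spectrum] at specRad_mem
  obtain ⟨f, hf⟩ := specRad_mem.exists_hasEigenvector
  exact ⟨f, hf.2, by simpa using hf.apply_eq_smul⟩

theorem specRad_congr {G : SimpleGraph V} {H : SimpleGraph W} (e : G ≃g H) :
    specRad G = specRad H := by
  classical
  rw [specRad, specRad, adjMat_eq_adjMatrix, adjMat_eq_adjMatrix, ← e.reindex_adjMatrix ℝ,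
    ← coe_reindexAlgEquiv ℝ ℝ, AlgEquiv.spectrum_eq]

/-- A Perron vector of `G`: an entrywise positive eigenvector of the adjacency matrix for the
spectral radius. No normalization is imposed. -/
structure IsPerronVector (G : SimpleGraph V) (f : V → ℝ) : Prop where
  pos : ∀ i, 0 < f i
  mulVec_eq : adjMat G *ᵥ f = specRad G • f

theorem exists_isPerronVector {G : SimpleGraph V} (hG : G.Connected) :
    ∃ f, IsPerronVector G f := by
  have := hG.nonempty
  obtain ⟨f, hf_ne, hf⟩ := exists_ne_zero_mulVec_eq_specRad_smul G
  have habs := mulVec_abs_eq_smul (isHermitian_adjMat G) (adjMat_nonneg G)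
    (fun _ => le_specRad G) hf
  exact ⟨|f|, pos_of_mulVec_eq_smul hG (abs_nonneg f) (by simpa using hf_ne) habs, habs⟩

/- Pair the inequality with a Perron vector, on which the adjacency matrix acts as `specRad G`. -/
theorem specRad_lt_of_mulVec_lt {G : SimpleGraph V} (hG : G.Connected) {f : V → ℝ} {μ : ℝ}
    (hf : 0 ≤ f) (h : adjMat G *ᵥ f < μ • f) : specRad G < μ := by
  obtain ⟨p, hp⟩ := exists_isPerronVector hG
  obtain ⟨hle, i, hi⟩ := Pi.lt_def.mp h
  have dotProduct_lt : p ⬝ᵥ (adjMat G *ᵥ f) < p ⬝ᵥ (μ • f) :=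
    sum_lt_sum (fun j _ => mul_le_mul_of_nonneg_left (hle j) (hp.pos j).le)
      ⟨i, mem_univ i, mul_lt_mul_of_pos_left hi (hp.pos i)⟩
  rw [dotProduct_adjMat_mulVec, hp.mulVec_eq, smul_dotProduct, dotProduct_smul] at dotProduct_lt
  exact lt_of_mul_lt_mul_right dotProduct_lt
    (dotProduct_nonneg_of_nonneg (fun j => (hp.pos j).le) hf)

theorem specRad_lt_specRad {H G : SimpleGraph V} (hH : H.Connected) (h : H < G) :
    specRad H < specRad G := by
  classical
  obtain ⟨f, hf⟩ := exists_isPerronVector (hH.mono h.le)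
  have hf_nonneg : 0 ≤ f := fun i => (hf.pos i).le
  obtain ⟨a, b, hab, hHab⟩ : ∃ a b, G.Adj a b ∧ ¬ H.Adj a b := by
    by_contra! hcon
    exact h.not_ge hcon
  refine specRad_lt_of_mulVec_lt hH hf_nonneg ?_
  rw [← hf.mulVec_eq]
  refine Pi.lt_def.mpr ⟨adjMat_mulVec_mono h.le hf_nonneg, a, ?_⟩
  rw [adjMat_mulVec_apply, adjMat_mulVec_apply]
  exact sum_lt_sum_of_subset (Set.toFinset_mono (neighborSet_mono h.le a)) (by simpa using hab)
    (by simpa using hHab) (hf.pos b) fun j _ _ => (hf.pos j).le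

theorem nonempty_iso_of_isContained {H : SimpleGraph V} {G : SimpleGraph W} (hH : H.Connected)
    (hcard : Fintype.card V = Fintype.card W) (hHG : H ⊑ G) (hr : specRad G ≤ specRad H) :
    Nonempty (G ≃g H) := by
  obtain ⟨φ⟩ := hHG
  let e : V ≃ W := Equiv.ofBijective φ
    ((Fintype.bijective_iff_injective_and_card φ).mpr ⟨φ.injective, hcard⟩)
  let iso : G.comap e ≃g G := Iso.comap e G
  have hle : H ≤ G.comap e := fun _ _ => φ.toHom.map_adj
  have heq : H = G.comap e := by
    by_contra hne
    have := specRad_lt_specRad hH (hle.lt_of_ne hne)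
    rw [specRad_congr iso] at this
    exact this.not_ge hr
  exact ⟨heq ▸ iso.symm⟩

end SpectralRadius

namespace IsPerronVector

variable {V : Type*} [Fintype V] [DecidableEq V] {G : SimpleGraph V} {f : V → ℝ}

theorem sum_neighborFinset [DecidableRel G.Adj] (hf : IsPerronVector G f) (i : V) :
    ∑ j ∈ G.neighborFinset i, f j = specRad G * f i := by
  rw [← adjMat_mulVec_apply, hf.mulVec_eq, Pi.smul_apply, smul_eq_mul]

theorem sum_le (hf : IsPerronVector G f) {i : V} {S : Finset V} (hS : ∀ j ∈ S, G.Adj i j) :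
    ∑ j ∈ S, f j ≤ specRad G * f i := by
  classical
  rw [← hf.sum_neighborFinset]
  exact sum_le_sum_of_subset_of_nonneg (fun j hj => by simpa using hS j hj)
    fun j _ _ => (hf.pos j).le

theorem le_of_adj (hf : IsPerronVector G f) {i j : V} (hij : G.Adj i j) :
    f j ≤ specRad G * f i := by
  simpa using hf.sum_le (S := {j}) (by simpa using hij)

theorem add_le_of_adj (hf : IsPerronVector G f) {i j k : V} (hij : G.Adj i j)
    (hik : G.Adj i k) (hjk : j ≠ k) : f j + f k ≤ specRad G * f i := by
  simpa [sum_pair hjk] using hf.sum_le (S := {j, k}) (by simp [hij, hik])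

/- All neighbours of `x` other than `y` have entry at least `f x / specRad G`. -/
theorem mul_add_degree_sub_one_mul_le [DecidableRel G.Adj] (hf : IsPerronVector G f) {x y : V}
    (hxy : G.Adj x y) :
    specRad G * f y + (G.degree x - 1) * f x ≤ specRad G ^ 2 * f x := by
  have hy : y ∈ G.neighborFinset x := by simpa using hxy
  have card_erase : (#((G.neighborFinset x).erase y) : ℝ) = G.degree x - 1 := by
    rw [cast_card_erase_of_mem hy, card_neighborFinset_eq_degree]
  have erase_le : (G.degree x - 1) * f x ≤
      ∑ w ∈ (G.neighborFinset x).erase y, specRad G * f w := by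
    rw [← card_erase, ← nsmul_eq_mul]
    refine card_nsmul_le_sum _ _ _ fun w hw => hf.le_of_adj (Adj.symm ?_)
    simpa using mem_of_mem_erase hw
  calc specRad G * f y + (G.degree x - 1) * f x
      ≤ specRad G * f y + ∑ w ∈ (G.neighborFinset x).erase y, specRad G * f w := by gcongr
    _ = specRad G * ∑ w ∈ G.neighborFinset x, f w := by
      rw [add_sum_erase _ (fun w => specRad G * f w) hy, mul_sum]
    _ = specRad G ^ 2 * f x := by rw [hf.sum_neighborFinset]; ring

end IsPerronVector

section LowerBounds

variable {V : Type*} [Fintype V] [DecidableEq V] {G : SimpleGraph V}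

theorem specRad_pos (hG : G.Connected) {x y : V} (hxy : G.Adj x y) : 0 < specRad G := by
  obtain ⟨f, hf⟩ := exists_isPerronVector hG
  exact pos_of_mul_pos_left ((hf.pos y).trans_le (hf.le_of_adj hxy)) (hf.pos x).le

variable [DecidableRel G.Adj]

theorem one_le_sq_specRad_sub_one_mul (hG : G.Connected) {x y z : V} (hxy : G.Adj x y)
    (hyz : G.Adj y z) (hxz : x ≠ z) :
    1 < specRad G ^ 2 ∧ 1 ≤ (specRad G ^ 2 - 1) * (specRad G ^ 2 - G.degree x) := by
  obtain ⟨f, hf⟩ := exists_isPerronVector hG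
  set ρ := specRad G
  have hρ : 0 < ρ := specRad_pos hG hxy
  have hx := hf.pos x
  have at_y : ρ * f x ≤ (ρ ^ 2 - 1) * f y := by
    have := mul_le_mul_of_nonneg_left (hf.add_le_of_adj hxy.symm hyz hxz) hρ.le
    linarith [hf.le_of_adj hyz.symm]
  have one_lt : 0 < ρ ^ 2 - 1 :=
    pos_of_mul_pos_left ((mul_pos hρ hx).trans_le at_y) (hf.pos y).le
  have at_x := hf.mul_add_degree_sub_one_mul_le hxy
  refine ⟨by linarith, ?_⟩
  have key : ρ ^ 2 * f x ≤ ((ρ ^ 2 - 1) * (ρ ^ 2 - G.degree x + 1)) * f x := by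
    calc ρ ^ 2 * f x = ρ * (ρ * f x) := by ring
      _ ≤ ρ * ((ρ ^ 2 - 1) * f y) := by gcongr
      _ = (ρ ^ 2 - 1) * (ρ * f y) := by ring
      _ ≤ (ρ ^ 2 - 1) * ((ρ ^ 2 - G.degree x + 1) * f x) :=
        mul_le_mul_of_nonneg_left (by linarith) one_lt.le
      _ = _ := by ring
  linarith [le_of_mul_le_mul_right key hx]

theorem add_one_le_sq_specRad (hG : G.Connected) {u v w : V} {d : ℕ} (huv : u ≠ v)
    (huw : G.Adj u w) (hvw : G.Adj v w) (hu : d ≤ G.degree u) (hv : d ≤ G.degree v) :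
    d + 1 ≤ specRad G ^ 2 := by
  obtain ⟨f, hf⟩ := exists_isPerronVector hG
  have at_w : f u + f v ≤ specRad G * f w := hf.add_le_of_adj huw.symm hvw.symm huv
  have at_endpoint : ∀ x, G.Adj x w → d ≤ G.degree x →
      specRad G * f w + (d - 1) * f x ≤ specRad G ^ 2 * f x := by
    intro x hxw hd
    have hd' : (d : ℝ) ≤ G.degree x := by exact_mod_cast hd
    have := mul_le_mul_of_nonneg_right hd' (hf.pos x).le
    linarith [hf.mul_add_degree_sub_one_mul_le hxw]
  have key : (d + 1) * (f u + f v) ≤ specRad G ^ 2 * (f u + f v) := by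
    linarith [at_endpoint u huw hu, at_endpoint v hvw hv]
  exact le_of_mul_le_mul_right key (add_pos (hf.pos u) (hf.pos v))

end LowerBounds

section Domination

variable {V W : Type*}

theorem IsDomSet.map {G : SimpleGraph V} {H : SimpleGraph W} (e : G ≃g H) {D : Finset V}
    (hD : IsDomSet G D) : IsDomSet H (D.map e.toEquiv.toEmbedding) := by
  intro w hw
  obtain ⟨u, hu, huw⟩ := hD (e.symm w) fun hw' => hw (mem_map.mpr ⟨_, hw', e.apply_symm_apply w⟩)
  exact ⟨e u, mem_map_of_mem _ hu, by simpa using e.map_adj_iff.mpr huw⟩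

variable [Fintype V] [Fintype W] {G : SimpleGraph V}

theorem domNum_le {D : Finset V} (hD : IsDomSet G D) : domNum G ≤ #D :=
  Nat.sInf_le ⟨D, hD, rfl⟩

theorem exists_isDomSet_card_eq_domNum (G : SimpleGraph V) :
    ∃ D : Finset V, IsDomSet G D ∧ #D = domNum G :=
  Nat.sInf_mem (s := {k | ∃ D : Finset V, IsDomSet G D ∧ #D = k})
    ⟨_, univ, fun v hv => absurd (mem_univ v) hv, rfl⟩

theorem domNum_le_domNum_of_iso {H : SimpleGraph W} (e : G ≃g H) : domNum H ≤ domNum G := by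
  obtain ⟨D, hD, hcard⟩ := exists_isDomSet_card_eq_domNum G
  exact (domNum_le (hD.map e)).trans_eq ((card_map _).trans hcard)

theorem domNum_congr {H : SimpleGraph W} (e : G ≃g H) : domNum G = domNum H :=
  (domNum_le_domNum_of_iso e.symm).antisymm (domNum_le_domNum_of_iso e)

theorem domNum_eq_two_iff [DecidableEq V] :
    domNum G = 2 ↔ (∀ x, ¬ IsDomSet G {x}) ∧ ∃ u v, u ≠ v ∧ IsDomSet G {u, v} := by
  obtain ⟨D, hD, hcard⟩ := exists_isDomSet_card_eq_domNum G
  constructor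
  · intro h
    refine ⟨fun x hx => ?_, ?_⟩
    · have := domNum_le hx
      rw [card_singleton] at this
      lia
    · obtain ⟨u, v, huv, rfl⟩ := card_eq_two.mp (hcard.trans h)
      exact ⟨u, v, huv, hD⟩
  · rintro ⟨hsingle, u, v, huv, hpair⟩
    refine ((domNum_le hpair).trans_eq (card_pair huv)).antisymm ?_
    by_contra! hlt
    obtain hzero | hone : #D = 0 ∨ #D = 1 := by lia
    · obtain rfl := card_eq_zero.mp hzero
      obtain ⟨_, hu, -⟩ := hD u (notMem_empty u)
      exact notMem_empty _ hu
    · obtain ⟨x, rfl⟩ := card_eq_one.mp hone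
      exact hsingle x hD

end Domination

section ClosedNeighborhood

variable {V : Type*} [Fintype V] [DecidableEq V] {G : SimpleGraph V} [DecidableRel G.Adj]

/-- The closed neighbourhood `N[x]` of a vertex: `x` together with its neighbours. -/
def closedNbhd (G : SimpleGraph V) [DecidableRel G.Adj] (x : V) : Finset V :=
  insert x (G.neighborFinset x)

@[simp]
theorem mem_closedNbhd {x w : V} : w ∈ closedNbhd G x ↔ w = x ∨ G.Adj x w := by
  simp [closedNbhd]

theorem card_closedNbhd (G : SimpleGraph V) [DecidableRel G.Adj] (x : V) :
    #(closedNbhd G x) = G.degree x + 1 := by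
  rw [closedNbhd, card_insert_of_notMem (by simp), card_neighborFinset_eq_degree]

theorem isDomSet_iff_forall_mem_closedNbhd {D : Finset V} :
    IsDomSet G D ↔ ∀ w, ∃ u ∈ D, w ∈ closedNbhd G u := by
  refine ⟨fun hD w => ?_, fun h w hw => ?_⟩
  · by_cases hw : w ∈ D
    · exact ⟨w, hw, by simp⟩
    · obtain ⟨u, hu, huw⟩ := hD w hw
      exact ⟨u, hu, by simp [huw]⟩
  · obtain ⟨u, hu, hwu⟩ := h w
    refine ⟨u, hu, (mem_closedNbhd.mp hwu).resolve_left ?_⟩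
    rintro rfl
    exact hw hu

theorem exists_adj_adj_of_notMem_closedNbhd (hG : G.Connected) {x v : V}
    (hv : v ∉ closedNbhd G x) : ∃ y z, G.Adj x y ∧ G.Adj y z ∧ z ∉ closedNbhd G x := by
  obtain ⟨y, hy, z, hz, hyz⟩ :=
    exists_boundary_adj hG (S := closedNbhd G x) (a := x) (by simp) (by simpa using hv)
  refine ⟨y, z, (mem_closedNbhd.mp hy).resolve_left ?_, hyz, hz⟩
  rintro rfl
  exact hz (by simp [hyz])

theorem adj_adj_of_closedNbhd_inter_eq_singleton {u v w : V} (huv : u ≠ v)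
    (h : closedNbhd G u ∩ closedNbhd G v = {w}) : G.Adj u w ∧ G.Adj v w ∧ ¬ G.Adj u v := by
  have eq_w : ∀ x, x ∈ closedNbhd G u → x ∈ closedNbhd G v → x = w := fun x hxu hxv =>
    mem_singleton.mp (h ▸ mem_inter.mpr ⟨hxu, hxv⟩)
  have huv_adj : ¬ G.Adj u v := fun hadj =>
    huv ((eq_w u (by simp) (by simp [hadj.symm])).trans
      (eq_w v (by simp [hadj]) (by simp)).symm)
  obtain ⟨hwu, hwv⟩ := mem_inter.mp (h.symm ▸ mem_singleton_self w)
  rw [mem_closedNbhd] at hwu hwv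
  grind [G.adj_comm]

theorem card_closedNbhd_add_card_closedNbhd {u v : V} (h : IsDomSet G {u, v}) :
    #(closedNbhd G u) + #(closedNbhd G v) =
      Fintype.card V + #(closedNbhd G u ∩ closedNbhd G v) := by
  have union_eq : closedNbhd G u ∪ closedNbhd G v = univ := by
    ext w
    simpa using isDomSet_iff_forall_mem_closedNbhd.mp h w
  rw [← card_univ, ← union_eq, card_union_add_card_inter]

end ClosedNeighborhood

namespace Hgraph

open Sum

theorem card_vertices {n : ℕ} (hn : 4 ≤ n) :
    Fintype.card (Fin 4 ⊕ (Fin (n / 2 - 2) ⊕ Fin ((n + 1) / 2 - 2))) = n := by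
  simp only [Fintype.card_sum, Fintype.card_fin]
  lia

variable (n : ℕ)

theorem adj_spine : (Hgraph n).Adj (inl 0) (inl 1) ∧ (Hgraph n).Adj (inl 1) (inl 2) ∧
    (Hgraph n).Adj (inl 2) (inl 3) := by
  simp [Hgraph]

theorem adj_pendant_left (j : Fin (n / 2 - 2)) : (Hgraph n).Adj (inl 0) (inr (inl j)) := by
  simp [Hgraph]

theorem adj_pendant_right (j : Fin ((n + 1) / 2 - 2)) :
    (Hgraph n).Adj (inl 3) (inr (inr j)) := by
  simp [Hgraph]

theorem adj_map_of_forall {V : Type*} {G : SimpleGraph V} {n : ℕ}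
    {φ : Fin 4 ⊕ (Fin (n / 2 - 2) ⊕ Fin ((n + 1) / 2 - 2)) → V}
    (h01 : G.Adj (φ (inl 0)) (φ (inl 1))) (h12 : G.Adj (φ (inl 1)) (φ (inl 2)))
    (h23 : G.Adj (φ (inl 2)) (φ (inl 3))) (hleft : ∀ j, G.Adj (φ (inl 0)) (φ (inr (inl j))))
    (hright : ∀ j, G.Adj (φ (inl 3)) (φ (inr (inr j)))) {x y}
    (hxy : (Hgraph n).Adj x y) : G.Adj (φ x) (φ y) := by
  rw [Hgraph, fromRel_adj] at hxy
  rcases hxy.2 with (⟨rfl, rfl⟩ | ⟨rfl, rfl⟩ | ⟨rfl, rfl⟩ | ⟨j, rfl, rfl⟩ | ⟨j, rfl, rfl⟩) |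
    (⟨rfl, rfl⟩ | ⟨rfl, rfl⟩ | ⟨rfl, rfl⟩ | ⟨j, rfl, rfl⟩ | ⟨j, rfl, rfl⟩)
  exacts [h01, h12, h23, hleft j, hright j, h01.symm, h12.symm, h23.symm, (hleft j).symm,
    (hright j).symm]

theorem connected : (Hgraph n).Connected := by
  obtain ⟨h01, h12, h23⟩ := adj_spine n
  have reach_three : (Hgraph n).Reachable (inl 0) (inl 3) :=
    (h01.reachable.trans h12.reachable).trans h23.reachable
  refine (connected_iff_exists_forall_reachable _).mpr ⟨inl 0, ?_⟩
  rintro (i | j | j)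
  · fin_cases i
    exacts [Reachable.refl _, h01.reachable, h01.reachable.trans h12.reachable, reach_three]
  · exact (adj_pendant_left n j).reachable
  · exact reach_three.trans (adj_pendant_right n j).reachable

theorem domNum_eq_two : domNum (Hgraph n) = 2 := by
  refine domNum_eq_two_iff.mpr ⟨fun x hx => ?_, inl 0, inl 3, by simp, ?_⟩
  · have adj_of_ne : ∀ y, y ≠ x → (Hgraph n).Adj x y := fun y hy => by
      simpa using hx y (by simpa using hy)
    have h0 := adj_of_ne (inl 0)
    have h3 := adj_of_ne (inl 3)
    rcases x with i | j | j
    · fin_cases i <;> simp [Hgraph] at h0 h3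
    · simp [Hgraph] at h3
    · simp [Hgraph] at h0
  · obtain ⟨h01, -, h23⟩ := adj_spine n
    rintro (i | j | j) hw
    · fin_cases i
      · simp at hw
      · exact ⟨inl 0, by simp, h01⟩
      · exact ⟨inl 3, by simp, h23.symm⟩
      · simp at hw
    · exact ⟨inl 0, by simp, adj_pendant_left n j⟩
    · exact ⟨inl 3, by simp, adj_pendant_right n j⟩

theorem adjMat_mulVec (f : Fin 4 ⊕ (Fin (n / 2 - 2) ⊕ Fin ((n + 1) / 2 - 2)) → ℝ) :
    adjMat (Hgraph n) *ᵥ f =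
      Sum.elim ![f (inl 1) + ∑ j, f (inr (inl j)), f (inl 0) + f (inl 2),
        f (inl 1) + f (inl 3), f (inl 2) + ∑ j, f (inr (inr j))]
      (Sum.elim (fun _ => f (inl 0)) fun _ => f (inl 3)) := by
  classical
  ext (i | j | j)
  · fin_cases i <;> simp [adjMat, mulVec, dotProduct, Hgraph, Fin.sum_univ_four]
  · simp [adjMat, mulVec, dotProduct, Hgraph]
  · simp [adjMat, mulVec, dotProduct, Hgraph]

variable {n} {μ : ℝ}

/- The test vector has entries `μ * x, b, c, μ * y` along the path and `x`, `y` on the pendant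
vertices, so that the eigenvector equations hold exactly at the latter. -/
theorem specRad_lt_of_test_vector {x b c y : ℝ} (hμ : 0 ≤ μ) (hx : 0 ≤ x) (hb : 0 ≤ b)
    (hc : 0 ≤ c) (hy : 0 ≤ y) (h0 : b + (n / 2 - 2 : ℕ) * x < μ ^ 2 * x)
    (h1 : μ * x + c ≤ μ * b) (h2 : b + μ * y ≤ μ * c)
    (h3 : c + ((n + 1) / 2 - 2 : ℕ) * y ≤ μ ^ 2 * y) : specRad (Hgraph n) < μ := by
  refine specRad_lt_of_mulVec_lt (connected n)
    (f := Sum.elim ![μ * x, b, c, μ * y] (Sum.elim (fun _ => x) fun _ => y)) ?_ ?_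
  · rintro (i | _ | _)
    · fin_cases i
      exacts [mul_nonneg hμ hx, hb, hc, mul_nonneg hμ hy]
    · exact hx
    · exact hy
  · rw [adjMat_mulVec]
    have at_zero : b + ∑ _j : Fin (n / 2 - 2), x < μ * (μ * x) := by
      simpa [← mul_assoc, ← sq] using h0
    have at_three : c + ∑ _j : Fin ((n + 1) / 2 - 2), y ≤ μ * (μ * y) := by
      simpa [← mul_assoc, ← sq] using h3
    refine Pi.lt_def.mpr ⟨?_, inl 0, at_zero⟩
    rintro (i | _ | _)
    · fin_cases i
      exacts [at_zero.le, h1, h2, at_three]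
    · exact le_rfl
    · exact le_rfl

/- A test vector equal to `μ` on the two inner path vertices and `μ - 1` on all pendant vertices
satisfies the eigenvector equations at the former as well. -/
theorem specRad_lt_of_one_le_mul {m : ℕ} (hm : 3 ≤ m) (hnm : (n + 1) / 2 ≤ m) (hμ : 0 ≤ μ)
    (hμ_sq : 1 < μ ^ 2) (h : 1 ≤ (μ ^ 2 - 1) * (μ ^ 2 - m)) : specRad (Hgraph n) < μ := by
  have three_le : (3 : ℝ) ≤ m := by exact_mod_cast hm
  have one_lt : 1 < μ := (one_lt_sq_iff₀ hμ).mp hμ_sq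
  have m_lt : (m : ℝ) < μ ^ 2 :=
    sub_pos.mp (pos_of_mul_pos_right (one_pos.trans_le h) (sub_pos.mpr hμ_sq).le)
  have add_one_lt : μ + 1 < μ ^ 2 := by nlinarith
  have endpoint : μ + (m - 2) * (μ - 1) < μ ^ 2 * (μ - 1) := by
    have : (μ + (m - 2) * (μ - 1)) * (μ + 1) < μ ^ 2 * (μ - 1) * (μ + 1) := by linarith
    exact lt_of_mul_lt_mul_right this (by linarith)
  have pendant_le : ∀ k : ℕ, k ≤ m - 2 → μ + k * (μ - 1) < μ ^ 2 * (μ - 1) := by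
    intro k hk
    have hk' : (k : ℝ) ≤ m - 2 := by
      rw [← Nat.cast_two, ← Nat.cast_sub (by lia)]
      exact_mod_cast hk
    have := mul_le_mul_of_nonneg_right hk' (sub_nonneg.mpr one_lt.le)
    linarith
  exact specRad_lt_of_test_vector (x := μ - 1) (b := μ) (c := μ) (y := μ - 1) hμ (by linarith) hμ
    hμ (by linarith) (pendant_le _ (by lia)) (by linarith) (by linarith)
    (pendant_le _ (by lia)).le

/- Here the larger end `v4` has `m - 2` pendant vertices; a test vector for `μ ^ 2 = m` is obtained
by starting with `μ` there and propagating the eigenvector equations along the path towards `v1`,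
the only vertex where the equation then fails. -/
theorem specRad_two_mul_sub_one_lt {m : ℕ} (hm : 4 ≤ m) (hμ : 0 ≤ μ) (h : m ≤ μ ^ 2) :
    specRad (Hgraph (2 * m - 1)) < μ := by
  have four_le : (4 : ℝ) ≤ m := by exact_mod_cast hm
  have left_card : (((2 * m - 1) / 2 - 2 : ℕ) : ℝ) = m - 3 := by
    rw [show (2 * m - 1) / 2 - 2 = m - 3 by lia, Nat.cast_sub (by lia), Nat.cast_ofNat]
  have right_card : (((2 * m - 1 + 1) / 2 - 2 : ℕ) : ℝ) = m - 2 := by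
    rw [show (2 * m - 1 + 1) / 2 - 2 = m - 2 by lia, Nat.cast_sub (by lia), Nat.cast_ofNat]
  refine specRad_lt_of_test_vector (x := μ ^ 2 - 2) (b := μ ^ 2) (c := 2 * μ) (y := μ) hμ
    (by linarith) (sq_nonneg μ) (by linarith) hμ ?_ (by linarith) (by linarith) ?_
  · have left_le := mul_le_mul_of_nonneg_right (sub_le_sub_right h 3)
      (show (0 : ℝ) ≤ μ ^ 2 - 2 by linarith)
    rw [left_card]
    linarith
  · rw [right_card]
    have := mul_le_mul_of_nonneg_right h hμ
    linarith

theorem isContained_of_path {V : Type*} [DecidableEq V] {G : SimpleGraph V} {a b c d : V}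
    (hab : G.Adj a b) (hbc : G.Adj b c) (hcd : G.Adj c d) (hac : a ≠ c) (had : a ≠ d) (hbd : b ≠ d)
    {P Q : Finset V} (hP : ∀ x ∈ P, G.Adj a x) (hQ : ∀ x ∈ Q, G.Adj d x) (hPQ : Disjoint P Q)
    (hP_path : Disjoint P {b, c, d}) (hQ_path : Disjoint Q {a, b, c})
    (hP_card : n / 2 - 2 ≤ #P) (hQ_card : (n + 1) / 2 - 2 ≤ #Q) : Hgraph n ⊑ G := by
  obtain ⟨left⟩ : Nonempty (Fin (n / 2 - 2) ↪ P) :=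
    Function.Embedding.nonempty_of_card_le (by simpa using hP_card)
  obtain ⟨right⟩ : Nonempty (Fin ((n + 1) / 2 - 2) ↪ Q) :=
    Function.Embedding.nonempty_of_card_le (by simpa using hQ_card)
  have spine_injective : Function.Injective ![a, b, c, d] := by
    have := hab.ne
    have := hbc.ne
    have := hcd.ne
    intro i j hij
    fin_cases i <;> fin_cases j <;> simp_all
  have pendants_injective : Function.Injective
      (Sum.elim (fun j => (left j : V)) fun j => (right j : V)) :=
    (Subtype.val_injective.comp left.injective).sumElim
      (Subtype.val_injective.comp right.injective)
      fun i j => disjoint_iff_ne.mp hPQ _ (left i).2 _ (right j).2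
  refine ⟨⟨_, adj_map_of_forall (φ := Sum.elim ![a, b, c, d]
    (Sum.elim (fun j => (left j : V)) fun j => (right j : V))) hab hbc hcd
    (fun j => hP _ (left j).2) fun j => hQ _ (right j).2⟩,
    spine_injective.sumElim pendants_injective ?_⟩
  rintro i (j | j)
  · have := (hP _ (left j).2).ne
    have := disjoint_left.mp hP_path (left j).2
    fin_cases i <;> simp_all [eq_comm]
  · have := (hQ _ (right j).2).ne
    have := disjoint_left.mp hQ_path (right j).2
    fin_cases i <;> simp_all [eq_comm]

variable {V : Type*} [Fintype V] [DecidableEq V] {G : SimpleGraph V} [DecidableRel G.Adj]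

theorem isContained_of_disjoint_closedNbhd (hG : G.Connected) {u v : V}
    (hdom : IsDomSet G {u, v}) (hdisj : Disjoint (closedNbhd G u) (closedNbhd G v))
    (hu : n / 2 ≤ G.degree u + 1) (hv : (n + 1) / 2 ≤ G.degree v + 1) : Hgraph n ⊑ G := by
  have ne_of_mem : ∀ {x y}, x ∈ closedNbhd G u → y ∈ closedNbhd G v → x ≠ y := fun hx hy =>
    disjoint_iff_ne.mp hdisj _ hx _ hy
  have hv_notMem : v ∉ closedNbhd G u := fun h => ne_of_mem h (by simp) rfl
  obtain ⟨b, c, hub, hbc, hc⟩ := exists_adj_adj_of_notMem_closedNbhd hG hv_notMem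
  have hc_mem : c ∈ closedNbhd G v := by
    simpa only [mem_insert, mem_singleton, exists_eq_or_imp, exists_eq_left, hc, false_or] using
      isDomSet_iff_forall_mem_closedNbhd.mp hdom c
  have hb_mem : b ∈ closedNbhd G u := by simp [hub]
  have hb_notMem : b ∉ closedNbhd G v := fun h => ne_of_mem hb_mem h rfl
  have hu_notMem : u ∉ closedNbhd G v := fun h => ne_of_mem (by simp) h rfl
  have hcv : c ≠ v := by
    rintro rfl
    exact hb_notMem (by simp [hbc.symm])
  have hvc : G.Adj v c := (mem_closedNbhd.mp hc_mem).resolve_left hcv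
  refine isContained_of_path (P := (G.neighborFinset u).erase b)
    (Q := (G.neighborFinset v).erase c) hub hbc hvc.symm (ne_of_mem (by simp) hc_mem)
    (ne_of_mem (by simp) (by simp)) (ne_of_mem hb_mem (by simp)) (by simp) (by simp)
    ?_ ?_ ?_ ?_ ?_
  · exact hdisj.mono ((erase_subset _ _).trans (subset_insert _ _))
      ((erase_subset _ _).trans (subset_insert _ _))
  · simp_all
  · simp_all
  · rw [card_erase_of_mem (by simpa using hub), card_neighborFinset_eq_degree]
    lia
  · rw [card_erase_of_mem (by simpa using hvc), card_neighborFinset_eq_degree]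
    lia

theorem isContained_four_of_notMem_closedNbhd {x y z : V} (hxy : G.Adj x y) (hyz : G.Adj y z)
    (hz : z ∉ closedNbhd G x) (hdeg : 2 ≤ G.degree x) : Hgraph 4 ⊑ G := by
  obtain ⟨s, hs, hsy⟩ := exists_mem_ne ((G.card_neighborFinset_eq_degree x).symm ▸ hdeg) y
  rw [mem_neighborFinset] at hs
  rw [mem_closedNbhd, not_or] at hz
  have hsz : s ≠ z := by
    rintro rfl
    exact hz.2 hs
  exact isContained_of_path (P := ∅) (Q := ∅) hs.symm hxy hyz hsy hsz (Ne.symm hz.1)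
    (by simp) (by simp) (by simp) (by simp) (by simp) (by simp) (by simp)

theorem isContained_five_of_inter_eq_singleton {u v w : V} (huv : u ≠ v)
    (hinter : closedNbhd G u ∩ closedNbhd G v = {w}) (hu : 2 ≤ G.degree u)
    (hv : 2 ≤ G.degree v) : Hgraph 5 ⊑ G := by
  obtain ⟨huw, hvw, huv_adj⟩ := adj_adj_of_closedNbhd_inter_eq_singleton huv hinter
  have eq_w : ∀ x ∈ closedNbhd G u, x ∈ closedNbhd G v → x = w := fun x hxu hxv =>
    mem_singleton.mp (hinter ▸ mem_inter.mpr ⟨hxu, hxv⟩)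
  obtain ⟨a, ha, haw⟩ := exists_mem_ne ((G.card_neighborFinset_eq_degree u).symm ▸ hu) w
  rw [mem_neighborFinset] at ha
  have ha_notMem : a ∉ closedNbhd G v := fun h => haw (eq_w a (by simp [ha]) h)
  rw [mem_closedNbhd, not_or] at ha_notMem
  refine isContained_of_path (P := ∅) (Q := (G.neighborFinset v).erase w) ha.symm huw hvw.symm
    haw ha_notMem.1 huv (by simp) (by simp) (by simp) (by simp) ?_ (by simp) ?_
  · simp [ha_notMem.2, G.adj_comm v u, huv_adj]
  · rw [card_erase_of_mem (by simpa using hvw), card_neighborFinset_eq_degree]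
    lia

theorem isContained_of_le_degree (hn : 4 ≤ n) (hG : G.Connected) {x : V}
    (hx : ¬ IsDomSet G {x}) (hdeg : (n + 1) / 2 ≤ G.degree x)
    (hr : specRad G ≤ specRad (Hgraph n)) : Hgraph n ⊑ G := by
  obtain ⟨v, hv⟩ : ∃ v, v ∉ closedNbhd G x := by
    simpa [isDomSet_iff_forall_mem_closedNbhd] using hx
  obtain ⟨y, z, hxy, hyz, hz⟩ := exists_adj_adj_of_notMem_closedNbhd hG hv
  obtain rfl | hn5 := hn.eq_or_lt
  · exact isContained_four_of_notMem_closedNbhd hxy hyz hz hdeg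
  · have hxz : x ≠ z := by
      rintro rfl
      simp at hz
    obtain ⟨one_lt, one_le⟩ := one_le_sq_specRad_sub_one_mul hG hxy hyz hxz
    exact absurd (specRad_lt_of_one_le_mul (by lia) hdeg (specRad_pos hG hxy).le one_lt one_le)
      hr.not_gt

theorem isContained_of_inter_eq_singleton {m : ℕ} (hm : 3 ≤ m) (hG : G.Connected) {u v w : V}
    (huv : u ≠ v) (hinter : closedNbhd G u ∩ closedNbhd G v = {w}) (hu : m ≤ G.degree u + 1)
    (hv : m ≤ G.degree v + 1) (hr : specRad G ≤ specRad (Hgraph (2 * m - 1))) :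
    Hgraph (2 * m - 1) ⊑ G := by
  obtain ⟨huw, hvw, -⟩ := adj_adj_of_closedNbhd_inter_eq_singleton huv hinter
  obtain rfl | hm4 := hm.eq_or_lt
  · exact isContained_five_of_inter_eq_singleton huv hinter (by lia) (by lia)
  · have le_sq := add_one_le_sq_specRad (d := m - 1) hG huv huw hvw (by lia) (by lia)
    rw [Nat.cast_sub (by lia), Nat.cast_one, sub_add_cancel] at le_sq
    exact absurd (specRad_two_mul_sub_one_lt hm4 (specRad_pos hG huw).le le_sq) hr.not_gt

theorem isContained_of_degree_lt (hn : 4 ≤ n) (hcard : Fintype.card V = n) (hG : G.Connected)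
    {u v : V} (huv : u ≠ v) (hdom : IsDomSet G {u, v}) (hu : G.degree u < (n + 1) / 2)
    (hv : G.degree v < (n + 1) / 2) (hr : specRad G ≤ specRad (Hgraph n)) : Hgraph n ⊑ G := by
  have card_sum := card_closedNbhd_add_card_closedNbhd hdom
  rw [card_closedNbhd, card_closedNbhd, hcard] at card_sum
  obtain hempty | hone : #(closedNbhd G u ∩ closedNbhd G v) = 0 ∨
    #(closedNbhd G u ∩ closedNbhd G v) = 1 := by lia
  · have hdisj := disjoint_iff_inter_eq_empty.mpr (card_eq_zero.mp hempty)
    obtain hv_large | hu_large : (n + 1) / 2 ≤ G.degree v + 1 ∨ (n + 1) / 2 ≤ G.degree u + 1 := by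
      lia
    · exact isContained_of_disjoint_closedNbhd hG hdom hdisj (by lia) hv_large
    · rw [pair_comm] at hdom
      exact isContained_of_disjoint_closedNbhd hG hdom hdisj.symm (by lia) hu_large
  · obtain ⟨w, hw⟩ := card_eq_one.mp hone
    obtain ⟨m, rfl⟩ : ∃ m, n = 2 * m - 1 := ⟨(n + 1) / 2, by lia⟩
    exact isContained_of_inter_eq_singleton (by lia) hG huv hw (by lia) (by lia) hr

end Hgraph

theorem specRad_le_specRad_Hgraph {n : ℕ} (hn : 4 ≤ n) {G : SimpleGraph (Fin n)}
    (hmin : ∀ H : SimpleGraph (Fin n), H.Connected → domNum H = 2 → specRad G ≤ specRad H) :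
    specRad G ≤ specRad (Hgraph n) := by
  let e := Fintype.equivFinOfCardEq (Hgraph.card_vertices hn)
  let iso : Hgraph n ≃g (Hgraph n).map e.toEmbedding := Iso.map e (Hgraph n)
  rw [specRad_congr iso]
  exact hmin _ (iso.connected_iff.mp (Hgraph.connected n))
    ((domNum_congr iso).symm.trans (Hgraph.domNum_eq_two n))

theorem minimizer_domNum_two_general {V : Type*} [Fintype V] [DecidableEq V] {n : ℕ} (hn : 4 ≤ n)
    (hcard : Fintype.card V = n) {G : SimpleGraph V} (hconn : G.Connected) (hdom : domNum G = 2)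
    (hr : specRad G ≤ specRad (Hgraph n)) : Nonempty (G ≃g Hgraph n) := by
  classical
  suffices Hgraph n ⊑ G from nonempty_iso_of_isContained (Hgraph.connected n)
    ((Hgraph.card_vertices hn).trans hcard.symm) this hr
  obtain ⟨hsingle, u, v, huv, hpair⟩ := domNum_eq_two_iff.mp hdom
  by_cases hu : (n + 1) / 2 ≤ G.degree u
  · exact Hgraph.isContained_of_le_degree hn hconn (hsingle u) hu hr
  by_cases hv : (n + 1) / 2 ≤ G.degree v
  · exact Hgraph.isContained_of_le_degree hn hconn (hsingle v) hv hr
  exact Hgraph.isContained_of_degree_lt hn hcard hconn huv hpair (not_le.mp hu) (not_le.mp hv) hr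

theorem minimizer_domNum_two (n : ℕ) (hn : 4 ≤ n)
    (G : SimpleGraph (Fin n)) (hconn : G.Connected) (hdom : domNum G = 2)
    (hmin : ∀ H : SimpleGraph (Fin n), H.Connected → domNum H = 2 →
      specRad G ≤ specRad H) :
    Nonempty (G ≃g Hgraph n) :=
  minimizer_domNum_two_general hn (Fintype.card_fin n) hconn hdom
    (specRad_le_specRad_Hgraph hn hmin)
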